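/- Assume Γ(0) ≠ Γ(1) and 1 + ρ·ln(Γ(1)^{μ(1)} Γ(0)^{μ(0)}) > 0 for some ρ > 0, and let n ↦ L_n be a ρ-admissible scaling with associated sequence ρ_n. For each n ≥ 2 let (D_n, S_n) be a compound-binomial degree pair with parameters (n, L_n) and define Δ_n(x) = P( (D_n)^{1/√L_n} exp(−√L_n (1/ρ_n + ln(Γ(1)^{μ(1)} Γ(0)^{μ(0)}))) ≤ x ) − P( (Γ(1)/Γ(0))^{σ₀ Z} ≤ x ). Then sup_{x ≥ 0} |Δ_n(x)| = O(1/√(ln n)) as n → ∞, i.e. there exist a constant K and an integer n₀ such that sup_{x ≥ 0} |Δ_n(x)| ≤ K/√(ln n) for all n ≥ n₀. -/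

import Mathlib

/-!
Write `c = log Γ1 - log Γ0`, `m = μ1 log Γ1 + μ0 log Γ0` and `p_ℓ = Γ1 ^ ℓ Γ0 ^ (L - ℓ)`, so that
`log p_ℓ = L m + c (ℓ - L μ1)`. The logarithm of the normalized degree is
`(log D - log n - L m) / √L`. Given `S = ℓ`, the degree `D` is binomial with mean `(n - 1) p_ℓ`, and
by Chebyshev `log D` is within `2` of `log n + log p_ℓ` outside an exceptional event. Off that
event the logarithm of the normalized degree is `c (S - L μ1) / √L` up to `2 / √L`. The exceptional event has
probability `O(1 / log n)`: with probability `1 - O(1 / L)`, `S` is within `ε L` of its mean, and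
then `n p_S ≥ n ^ (δ / 4)` with `δ = 1 + ρ m > 0`.
As the Gaussian distribution function is Lipschitz, what is left is the Berry-Esseen bound for the
binomial variable `S` (`berryEsseen_mul`); `delta_bound` assembles the estimate for fixed `n`.

The Berry-Esseen bound is obtained by Stein's method. The binomial law satisfies the exact identity
`E[(S - N p) g(S)] = N p (1 - p) E[g(S' + 1) - g(S')]` with `S'` having one trial fewer
(`binE_stein`). Applied to the solution `f` of `f'(x) - x f(x) = 1_{x ≤ z} - Φ(z)`, with `z` a point
of the standardized lattice, the mean value theorem on each lattice cell of width `h` turns the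
difference quotient into `f'` at a point of the cell, and the error is of order `h (1 + |x|)`, since
`f` is bounded and Lipschitz (`stein_cell`). The same identity for an indicator `g` bounds the point
masses (`binE_point_le`), which allows passing from `S'` back to `S`. General `z` follow by
rounding.
-/

open MeasureTheory ProbabilityTheory Filter Real
open scoped ENNReal NNReal

noncomputable section

/-- A compound-binomial degree pair `(D, S)` with parameters `(n, L)`:
`S` is Binomial(L, μ1) and, conditionally on `S = ℓ`, `D` is
Binomial(n-1, Γ1^ℓ Γ0^(L-ℓ)); equivalently the joint pmf is as below. -/
def IsCompoundBinomialPair {Ω : Type*} [MeasurableSpace Ω] (P : Measure Ω)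
    (μ1 μ0 Γ1 Γ0 : ℝ) (n L : ℕ) (D S : Ω → ℕ) : Prop :=
  Measurable D ∧ Measurable S ∧
    ∀ d ≤ n - 1, ∀ ℓ ≤ L,
      P {ω | D ω = d ∧ S ω = ℓ} =
        ENNReal.ofReal ((L.choose ℓ : ℝ) * μ1 ^ ℓ * μ0 ^ (L - ℓ) *
          ((n - 1).choose d : ℝ) * (Γ1 ^ ℓ * Γ0 ^ (L - ℓ)) ^ d *
          (1 - Γ1 ^ ℓ * Γ0 ^ (L - ℓ)) ^ (n - 1 - d))

/-- A scaling `n ↦ L n` is `ρ`-admissible if `L n ~ ρ ln n` as `n → ∞`. -/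
def IsAdmissible (ρ : ℝ) (L : ℕ → ℕ) : Prop :=
  (∀ n, 0 < L n) ∧
    Tendsto (fun n => (L n : ℝ) / (ρ * Real.log n)) atTop (nhds 1)

/-- `Ψ(x) = (x+1) ln(x+1) - x`. -/
def Psi (x : ℝ) : ℝ := (x + 1) * Real.log (x + 1) - x

/-- The standard Gaussian distribution function. -/
def Phi (z : ℝ) : ℝ := ∫ t in Set.Iic z, Real.exp (-t ^ 2 / 2) / Real.sqrt (2 * Real.pi)

/-! ### Binomial expectations and their Stein identity -/

/-- The expectation of `g` under the binomial law with `n` trials and success probability `p`,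
computed by conditioning on the outcome of one trial. -/
def binE (p : ℝ) : ℕ → (ℕ → ℝ) → ℝ
  | 0, g => g 0
  | n + 1, g => (1 - p) * binE p n g + p * binE p n (fun k => g (k + 1))

lemma binE_eq_sum (p : ℝ) (n : ℕ) (g : ℕ → ℝ) :
    binE p n g = ∑ k ∈ Finset.range (n + 1),
      (n.choose k : ℝ) * p ^ k * (1 - p) ^ (n - k) * g k := by
  rw [← Finset.Nat.sum_antidiagonal_eq_sum_range_succ
    (fun i j => (n.choose i : ℝ) * p ^ i * (1 - p) ^ j * g i)]
  induction n generalizing g with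
  | zero => simp [binE]
  | succ n ih =>
    have h := Finset.sum_antidiagonal_choose_succ_mul
      (fun i j => p ^ i * (1 - p) ^ j * g i) n
    simp only [mul_assoc] at h ⊢
    rw [h, binE, ih, ih, Finset.mul_sum, Finset.mul_sum]
    congr 1
    · refine Finset.sum_congr rfl fun i _ => ?_
      ring
    · refine Finset.sum_congr rfl fun i hi => ?_
      have : n.choose i.2 = n.choose i.1 := by
        rw [Finset.HasAntidiagonal.mem_antidiagonal] at hi
        exact (Nat.choose_symm_of_eq_add (by omega)).symm
      rw [this]; ring

lemma binE_add (p : ℝ) (n : ℕ) (f g : ℕ → ℝ) :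
    binE p n (fun k => f k + g k) = binE p n f + binE p n g := by
  induction n generalizing f g with
  | zero => rfl
  | succ n ih => simp only [binE, ih]; ring

lemma binE_mul_left (p c : ℝ) (n : ℕ) (f : ℕ → ℝ) :
    binE p n (fun k => c * f k) = c * binE p n f := by
  induction n generalizing f with
  | zero => rfl
  | succ n ih => simp only [binE, ih]; ring

lemma binE_const (p c : ℝ) (n : ℕ) : binE p n (fun _ => c) = c := by
  induction n with
  | zero => rfl
  | succ n ih => simp only [binE, ih]; ring

lemma binE_sub (p : ℝ) (n : ℕ) (f g : ℕ → ℝ) :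
    binE p n (fun k => f k - g k) = binE p n f - binE p n g := by
  have h1 := binE_add p n f (fun k => (-1) * g k)
  rw [binE_mul_left] at h1
  have h2 : (fun k => f k - g k) = fun k => f k + (-1) * g k := by funext k; ring
  rw [h2, h1]; ring

lemma binE_mono {p : ℝ} (hp0 : 0 ≤ p) (hp1 : p ≤ 1) (n : ℕ) {f g : ℕ → ℝ}
    (h : ∀ k ≤ n, f k ≤ g k) : binE p n f ≤ binE p n g := by
  induction n generalizing f g with
  | zero => exact h 0 le_rfl
  | succ n ih =>
    simp only [binE]
    have h1 := ih (fun k hk => h k (by omega))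
    have h2 := ih (fun k hk => h (k + 1) (by omega))
    have : 0 ≤ 1 - p := by linarith
    gcongr

lemma binE_abs_le {p : ℝ} (hp0 : 0 ≤ p) (hp1 : p ≤ 1) (n : ℕ) {f g : ℕ → ℝ}
    (h : ∀ k ≤ n, |f k| ≤ g k) : |binE p n f| ≤ binE p n g := by
  rw [abs_le]
  constructor
  · have h1 := binE_mono hp0 hp1 n (f := fun k => (-1) * g k) (g := f)
      (fun k hk => by have := (abs_le.1 (h k hk)).1; linarith)
    rw [binE_mul_left] at h1; linarith
  · exact binE_mono hp0 hp1 n (fun k hk => (abs_le.1 (h k hk)).2)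

/-- Size biasing of the binomial law: `E[S g(S)] = N p E[g(S' + 1)]` with one trial fewer. -/
lemma binE_size_bias (p : ℝ) (n : ℕ) (g : ℕ → ℝ) :
    binE p (n + 1) (fun k : ℕ => (k : ℝ) * g k) = (n + 1) * p * binE p n (fun k => g (k + 1)) := by
  induction n generalizing g with
  | zero => simp [binE]
  | succ n ih =>
    have h1 : binE p (n + 1) (fun k : ℕ => ((k + 1 : ℕ) : ℝ) * g (k + 1))
        = (n + 1) * p * binE p n (fun k => g (k + 1 + 1))
          + binE p (n + 1) (fun k => g (k + 1)) := by
      rw [← ih (fun k => g (k + 1)), ← binE_add]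
      congr 1; funext k; push_cast; ring
    have h2 : binE p (n + 1) (fun k => g (k + 1)) = (1 - p) * binE p n (fun k => g (k + 1))
      + p * binE p n (fun k => g (k + 1 + 1)) := rfl
    have h3 : binE p (n + 1 + 1) (fun k : ℕ => (k : ℝ) * g k)
        = (1 - p) * binE p (n + 1) (fun k : ℕ => (k : ℝ) * g k)
        + p * binE p (n + 1) (fun k : ℕ => ((k + 1 : ℕ) : ℝ) * g (k + 1)) := rfl
    rw [h3, ih g, h1, h2]; push_cast; ring

/-- The Stein identity of the binomial law:
`E[(S - N p) g(S)] = N p (1 - p) E[g(S' + 1) - g(S')]`, with one trial fewer on the right. -/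
lemma binE_stein (p : ℝ) (n : ℕ) (g : ℕ → ℝ) :
    binE p (n + 1) (fun k : ℕ => ((k : ℝ) - (n + 1) * p) * g k)
      = (n + 1) * p * (1 - p) * binE p n (fun k => g (k + 1) - g k) := by
  have h1 : (fun k : ℕ => ((k : ℝ) - (n + 1) * p) * g k)
      = fun k : ℕ => (k : ℝ) * g k - ((n + 1) * p) * g k := by funext k; ring
  rw [h1, binE_sub, binE_size_bias, binE_mul_left, binE_sub]
  have h2 : binE p (n + 1) g = (1 - p) * binE p n g + p * binE p n (fun k => g (k + 1)) := rfl
  rw [h2]; ring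

lemma binE_variance (p : ℝ) (n : ℕ) :
    binE p n (fun k : ℕ => ((k : ℝ) - n * p) ^ 2) = n * p * (1 - p) := by
  cases n with
  | zero => simp [binE]
  | succ n =>
    have h := binE_stein p n (fun k : ℕ => (k : ℝ) - (n + 1) * p)
    have h1 : (fun k : ℕ => (((k + 1 : ℕ) : ℝ) - (n + 1) * p) - ((k : ℝ) - (n + 1) * p))
        = fun _ => 1 := by funext k; push_cast; ring
    rw [h1, binE_const] at h
    push_cast
    rw [← mul_one (_ * (1 - p)), ← h]
    congr 1; funext k; ring

lemma binE_chebyshev {p : ℝ} (hp0 : 0 ≤ p) (hp1 : p ≤ 1) (n : ℕ) {a : ℝ} (ha : 0 < a) :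
    binE p n (fun k : ℕ => if a < |(k : ℝ) - n * p| then 1 else 0) ≤ n * p * (1 - p) / a ^ 2 := by
  have h1 : ∀ k : ℕ, (if a < |(k : ℝ) - n * p| then (1 : ℝ) else 0)
      ≤ (a ^ 2)⁻¹ * ((k : ℝ) - n * p) ^ 2 := by
    intro k
    split_ifs with h
    · rw [inv_mul_eq_div, one_le_div (by positivity), ← sq_abs ((k : ℝ) - n * p)]
      gcongr
    · positivity
  refine (binE_mono hp0 hp1 n fun k _ => h1 k).trans ?_
  rw [binE_mul_left, binE_variance, inv_mul_eq_div]

/-- A uniform bound on the point masses, from the Stein identity for the indicator of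
`{k + 1, k + 2, …}`. -/
lemma binE_point_le {p : ℝ} (hp0 : 0 < p) (hp1 : p < 1) (n : ℕ) (k : ℤ) :
    binE p n (fun j : ℕ => if (j : ℤ) = k then 1 else 0) ≤ 1 / √((n + 1) * p * (1 - p)) := by
  set v : ℝ := (n + 1) * p * (1 - p) with hv
  have hq : 0 < 1 - p := by linarith
  have hvpos : 0 < v := by positivity
  have h := binE_stein p n (fun j : ℕ => if k + 1 ≤ (j : ℤ) then 1 else 0)
  have h1 : (fun j : ℕ => (if k + 1 ≤ ((j + 1 : ℕ) : ℤ) then (1 : ℝ) else 0)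
      - (if k + 1 ≤ (j : ℤ) then 1 else 0)) = fun j : ℕ => if (j : ℤ) = k then 1 else 0 := by
    funext j
    push_cast
    split_ifs <;> first | omega | norm_num
  rw [h1, ← hv] at h
  -- `|x| ≤ (√v + x² / √v) / 2` replaces Cauchy-Schwarz
  have h2 : ∀ j : ℕ, ((j : ℝ) - (n + 1) * p) * (if k + 1 ≤ (j : ℤ) then 1 else 0)
      ≤ √v / 2 + (1 / (2 * √v)) * ((j : ℝ) - ((n + 1 : ℕ) : ℝ) * p) ^ 2 := by
    intro j
    push_cast
    set x := (j : ℝ) - (n + 1) * p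
    have hs : 0 < √v := Real.sqrt_pos.2 hvpos
    have h3 : √v / 2 + (1 / (2 * √v)) * x ^ 2 - x = (√v - x) ^ 2 / (2 * √v) := by
      field_simp; ring
    have h4 : 0 ≤ (√v - x) ^ 2 / (2 * √v) := by positivity
    have h5 : 0 ≤ √v / 2 + (1 / (2 * √v)) * x ^ 2 := by positivity
    split_ifs <;> linarith
  have h6 := binE_mono hp0.le hp1.le (n + 1) fun j _ => h2 j
  rw [h, binE_add, binE_const, binE_mul_left, binE_variance] at h6
  push_cast at h6
  rw [← hv] at h6
  have hs : 0 < √v := Real.sqrt_pos.2 hvpos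
  have h7 : √v / 2 + 1 / (2 * √v) * v = √v := by
    have : v = √v * √v := (Real.mul_self_sqrt hvpos.le).symm
    nth_rw 3 [this]; field_simp; ring
  rw [h7] at h6
  rw [le_div_iff₀ hs]
  have h8 : v = √v * √v := (Real.mul_self_sqrt hvpos.le).symm
  rw [h8] at h6
  simp only [Real.sqrt_mul_self hs.le] at h6
  nlinarith

/-! ### The Gaussian distribution function and the Stein equation -/

/-- The standard Gaussian density. -/
def gdens (x : ℝ) : ℝ := Real.exp (-x ^ 2 / 2) / √(2 * π)

lemma gdens_eq (x : ℝ) : gdens x = gaussianPDFReal 0 1 x := by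
  simp only [gdens, gaussianPDFReal]
  rw [div_eq_inv_mul]; simp

lemma gdens_pos (x : ℝ) : 0 < gdens x := by unfold gdens; positivity

lemma continuous_gdens : Continuous gdens := by unfold gdens; fun_prop

lemma gdens_neg (x : ℝ) : gdens (-x) = gdens x := by simp [gdens]

lemma integrable_gdens : Integrable gdens := by
  have : gdens = gaussianPDFReal 0 1 := funext gdens_eq
  rw [this]; exact integrable_gaussianPDFReal 0 1

lemma integral_gdens : ∫ x, gdens x = 1 := by
  have : gdens = gaussianPDFReal 0 1 := funext gdens_eq
  rw [this]; exact integral_gaussianPDFReal_eq_one 0 one_ne_zero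

lemma gdens_le_one (x : ℝ) : gdens x ≤ 1 := by
  unfold gdens
  rw [div_le_one (by positivity)]
  have h1 : Real.exp (-x ^ 2 / 2) ≤ 1 := Real.exp_le_one_iff.2 (by nlinarith [sq_nonneg x])
  have h2 : 1 ≤ √(2 * π) := Real.one_le_sqrt.2 (by linarith [Real.pi_gt_three])
  linarith

lemma hasDerivAt_gdens (x : ℝ) : HasDerivAt gdens (-x * gdens x) x := by
  have h1 : HasDerivAt (fun y : ℝ => -y ^ 2 / 2) (-x) x := by
    have := ((hasDerivAt_pow 2 x).neg.div_const 2)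
    refine this.congr_deriv ?_
    simp; ring
  have h2 := h1.exp.div_const (√(2 * π))
  refine h2.congr_deriv ?_
  unfold gdens; ring

lemma gaussianReal_Iic (z : ℝ) : (gaussianReal 0 1 (Set.Iic z)).toReal = Phi z := by
  rw [gaussianReal_apply_eq_integral 0 one_ne_zero, ENNReal.toReal_ofReal]
  · unfold Phi
    refine integral_congr_ae (ae_of_all _ fun x => ?_)
    exact (gdens_eq x).symm
  · exact integral_nonneg fun x => gaussianPDFReal_nonneg 0 1 x

lemma hasDerivAt_Phi (x : ℝ) : HasDerivAt Phi (gdens x) x := by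
  have h1 : Phi = fun y => Phi 0 + ∫ t in (0 : ℝ)..y, gdens t := by
    funext y
    have := intervalIntegral.integral_Iic_sub_Iic (μ := volume) (f := gdens) (a := 0) (b := y)
      integrable_gdens.integrableOn integrable_gdens.integrableOn
    rw [← this]; unfold Phi gdens; ring
  rw [h1]
  exact (continuous_gdens.integral_hasStrictDerivAt 0 x).hasDerivAt.const_add _

lemma one_sub_Phi (x : ℝ) : 1 - Phi x = ∫ t in Set.Ioi x, gdens t := by
  have h := integral_add_compl (μ := volume) (s := Set.Iic x) measurableSet_Iic integrable_gdens
  rw [integral_gdens, Set.compl_Iic] at h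
  have : Phi x = ∫ t in Set.Iic x, gdens t := rfl
  linarith

lemma Phi_neg (x : ℝ) : Phi (-x) = 1 - Phi x := by
  rw [one_sub_Phi, ← neg_neg x, ← integral_comp_neg_Iic, neg_neg]
  have : Phi (-x) = ∫ t in Set.Iic (-x), gdens t := rfl
  rw [this]
  simp only [gdens_neg]

lemma Phi_nonneg (x : ℝ) : 0 ≤ Phi x := by
  have : Phi x = ∫ t in Set.Iic x, gdens t := rfl
  rw [this]; exact integral_nonneg fun t => (gdens_pos t).le

lemma Phi_le_one (x : ℝ) : Phi x ≤ 1 := by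
  have := Phi_nonneg (-x); rw [Phi_neg] at this; linarith

lemma Phi_mono : Monotone Phi :=
  monotone_of_hasDerivAt_nonneg hasDerivAt_Phi fun x => (gdens_pos x).le

lemma Phi_lipschitz (x y : ℝ) : |Phi x - Phi y| ≤ |x - y| := by
  have := Convex.norm_image_sub_le_of_norm_hasDerivWithin_le (f := Phi) (s := Set.univ)
    (C := 1) (x := y) (y := x) (fun z _ => (hasDerivAt_Phi z).hasDerivWithinAt)
    (fun z _ => by rw [Real.norm_of_nonneg (gdens_pos z).le]; exact gdens_le_one z)
    convex_univ trivial trivial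
  simpa using this

/-- The Mills inequality `x (1 - Φ(x)) ≤ φ(x)`, written at `-x`. -/
lemma mills (x : ℝ) : -x * Phi x ≤ gdens x := by
  have h0 : Phi x = ∫ t in Set.Ioi (-x), gdens t := by
    rw [← one_sub_Phi, Phi_neg]; ring
  have hlim : Tendsto gdens atTop (nhds 0) := by
    have h1 : Tendsto (fun x : ℝ => -x ^ 2 / 2) atTop atBot := by
      have : Tendsto (fun x : ℝ => x ^ 2 / 2) atTop atTop :=
        (tendsto_pow_atTop two_ne_zero).atTop_div_const two_pos
      refine (tendsto_neg_atTop_atBot.comp this).congr fun x => ?_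
      simp; ring
    have := (Real.tendsto_exp_atBot.comp h1).div_const (√(2 * π))
    rw [zero_div] at this
    exact this
  have hint : Integrable (fun t => t * gdens t) := by
    have := (integrable_mul_exp_neg_mul_sq (b := 1 / 2) (by norm_num)).div_const (√(2 * π))
    refine this.congr (ae_of_all _ fun t => ?_)
    simp only [gdens]; rw [mul_div_assoc]; congr 3; ring
  have h2 := integral_Ioi_of_hasDerivAt_of_tendsto' (a := -x) (f := fun t => -gdens t)
    (f' := fun t => t * gdens t) (m := 0)
    (fun t _ => (hasDerivAt_gdens t).neg.congr_deriv (by ring)) hint.integrableOn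
    (by simpa using hlim.neg)
  rw [gdens_neg] at h2
  have h3 : ∫ t in Set.Ioi (-x), -x * gdens t ≤ ∫ t in Set.Ioi (-x), t * gdens t := by
    refine setIntegral_mono_on (integrable_gdens.const_mul _).integrableOn hint.integrableOn
      measurableSet_Ioi fun t ht => ?_
    exact mul_le_mul_of_nonneg_right (le_of_lt ht) (gdens_pos t).le
  rw [integral_const_mul, ← h0] at h3
  linarith

/-- The ratio `Φ / φ`, which solves `R' = x R + 1`. -/
def mratio (x : ℝ) : ℝ := Phi x / gdens x

lemma mratio_nonneg (x : ℝ) : 0 ≤ mratio x := div_nonneg (Phi_nonneg x) (gdens_pos x).le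

lemma hasDerivAt_mratio (x : ℝ) : HasDerivAt mratio (x * mratio x + 1) x := by
  have h := (hasDerivAt_Phi x).div (hasDerivAt_gdens x) (gdens_pos x).ne'
  refine h.congr_deriv ?_
  have := (gdens_pos x).ne'
  unfold mratio; field_simp; ring

lemma mratio_mul_le {x : ℝ} (hx : x ≤ 0) : |x * mratio x| ≤ 1 := by
  rw [abs_mul, abs_of_nonpos hx, abs_of_nonneg (mratio_nonneg x), mratio, ← mul_div_assoc,
    div_le_one (gdens_pos x)]
  exact mills x

lemma mratio_le {x : ℝ} (hx : x ≤ 0) : mratio x ≤ 8 := by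
  rcases le_total x (-1) with h | h
  · have h1 := mratio_mul_le hx
    rw [abs_mul, abs_of_nonpos hx, abs_of_nonneg (mratio_nonneg x)] at h1
    nlinarith [mratio_nonneg x]
  · rw [mratio, div_le_iff₀ (gdens_pos x)]
    have h1 : 1 / 2 ≤ Real.exp (-x ^ 2 / 2) := by
      have := Real.add_one_le_exp (-x ^ 2 / 2)
      nlinarith
    have h2 : √(2 * π) ≤ 4 := by
      rw [Real.sqrt_le_left (by norm_num)]; nlinarith [Real.pi_lt_four]
    have h3 : 1 / 8 ≤ gdens x := by
      unfold gdens
      rw [le_div_iff₀ (by positivity)]; linarith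
    have := Phi_le_one x
    linarith

/-- The branch on `(-∞, z]` of the bounded solution of the Stein equation
`f'(x) - x f(x) = 1_{x ≤ z} - Φ(z)`; the branch on `[z, ∞)` is `x ↦ steinA (-z) (-x)`. -/
def steinA (z x : ℝ) : ℝ := (1 - Phi z) * mratio x

lemma hasDerivAt_steinA (z x : ℝ) :
    HasDerivAt (steinA z) (x * steinA z x + (1 - Phi z)) x :=
  ((hasDerivAt_mratio x).const_mul (1 - Phi z)).congr_deriv (by unfold steinA; ring)

lemma steinA_bound {z x : ℝ} (h : x ≤ z) : |steinA z x| ≤ 8 ∧ |x * steinA z x| ≤ 1 := by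
  have hz0 : 0 ≤ 1 - Phi z := by linarith [Phi_le_one z]
  have hz1 : 1 - Phi z ≤ 1 := by linarith [Phi_nonneg z]
  rcases le_total x 0 with hx | hx
  · constructor
    · rw [steinA, abs_mul, abs_of_nonneg hz0, abs_of_nonneg (mratio_nonneg x)]
      nlinarith [mratio_le hx, mratio_nonneg x]
    · have := mratio_mul_le hx
      rw [steinA, mul_left_comm, abs_mul, abs_of_nonneg hz0]
      nlinarith [abs_nonneg (x * mratio x)]
  · -- for `x ≥ 0`, the factor `1 - Φ(z) ≤ 1 - Φ(x) = Φ(-x)` compensates the growth of the ratio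
    have h1 : steinA z x ≤ mratio (-x) := by
      rw [steinA, mratio, mratio, gdens_neg, ← mul_div_assoc]
      apply div_le_div_of_nonneg_right _ (gdens_pos x).le
      rw [Phi_neg]
      nlinarith [Phi_mono h, Phi_le_one x, Phi_nonneg x]
    have h0 : 0 ≤ steinA z x := mul_nonneg hz0 (mratio_nonneg x)
    have h2 := mratio_le (x := -x) (by linarith)
    have h3 := mratio_mul_le (x := -x) (by linarith)
    rw [abs_mul, abs_neg, abs_of_nonneg hx, abs_of_nonneg (mratio_nonneg _)] at h3
    constructor
    · rw [abs_of_nonneg h0]; linarith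
    · rw [abs_of_nonneg (mul_nonneg hx h0)]
      nlinarith

lemma steinA_glue (z : ℝ) : steinA z z = steinA (-z) (-z) := by
  simp only [steinA, mratio, Phi_neg, gdens_neg]; ring

/-- On an interval `[w, w + h]` on which `g' = x g + c`, the zero-bias discrepancy of one lattice
step is of order `h (1 + h + |w|)`. -/
lemma cell_bound {g : ℝ → ℝ} {c w h p : ℝ} (hh : 0 < h) (hp0 : 0 ≤ p) (hp1 : p ≤ 1)
    (hc : |c| ≤ 1) (hg : ∀ x, HasDerivAt g (x * g x + c) x)
    (hb : ∀ x ∈ Set.Icc w (w + h), |g x| ≤ 8 ∧ |x * g x| ≤ 1) :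
    |(1 - p) * (w * g w) + p * ((w + h) * g (w + h)) + c - (g (w + h) - g w) / h|
      ≤ h * (2 * (|w| + h) + 8) := by
  obtain ⟨ξ, hξ, hξ'⟩ := exists_hasDerivAt_eq_slope g (fun x => x * g x + c)
    (by linarith : w < w + h) (fun x _ => (hg x).continuousAt.continuousWithinAt)
    (fun x _ => hg x)
  rw [add_sub_cancel_left] at hξ'
  rw [← hξ']
  have hξI : ξ ∈ Set.Icc w (w + h) := ⟨hξ.1.le, hξ.2.le⟩
  have hlip : ∀ x ∈ Set.Icc w (w + h), |g x - g ξ| ≤ 2 * h := by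
    intro x hx
    have := Convex.norm_image_sub_le_of_norm_hasDerivWithin_le (f := g)
      (s := Set.Icc w (w + h)) (C := 2) (x := ξ) (y := x)
      (fun y _ => (hg y).hasDerivWithinAt)
      (fun y hy => by
        rw [Real.norm_eq_abs]
        exact (abs_add_le _ _).trans (by linarith [(hb y hy).2]))
      (convex_Icc _ _) hξI hx
    rw [Real.norm_eq_abs, Real.norm_eq_abs] at this
    have h2 : |x - ξ| ≤ h := abs_le.2 ⟨by linarith [hx.1, hξ.2], by linarith [hx.2, hξ.1]⟩
    linarith
  have hF : ∀ x ∈ Set.Icc w (w + h), |x * g x - ξ * g ξ| ≤ h * (2 * (|w| + h) + 8) := by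
    intro x hx
    have h1 : x * g x - ξ * g ξ = x * (g x - g ξ) + (x - ξ) * g ξ := by ring
    have h2 : |x - ξ| ≤ h := abs_le.2 ⟨by linarith [hx.1, hξ.2], by linarith [hx.2, hξ.1]⟩
    have h3 : |x| ≤ |w| + h := by
      have h4 : |x - w| ≤ h := abs_le.2 ⟨by linarith [hx.1], by linarith [hx.2]⟩
      have h5 := abs_add_le w (x - w)
      rw [add_sub_cancel] at h5; linarith
    rw [h1]
    refine (abs_add_le _ _).trans ?_
    rw [abs_mul, abs_mul]
    have h6 := mul_le_mul h3 (hlip x hx) (abs_nonneg _) (by positivity)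
    have h7 := mul_le_mul h2 (hb ξ hξI).1 (abs_nonneg _) hh.le
    linarith
  have e : (1 - p) * (w * g w) + p * ((w + h) * g (w + h)) + c - (ξ * g ξ + c)
      = (1 - p) * (w * g w - ξ * g ξ) + p * ((w + h) * g (w + h) - ξ * g ξ) := by ring
  rw [e]
  have h1 := hF w ⟨le_rfl, by linarith⟩
  have h2 := hF (w + h) ⟨by linarith, le_rfl⟩
  refine (abs_add_le _ _).trans ?_
  rw [abs_mul, abs_mul, abs_of_nonneg hp0, abs_of_nonneg (by linarith : 0 ≤ 1 - p)]
  nlinarith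

/-- The bounded solution of the Stein equation `f'(x) - x f(x) = 1_{x ≤ z} - Φ(z)`. -/
def stein (z x : ℝ) : ℝ := if x ≤ z then steinA z x else steinA (-z) (-x)

lemma stein_of_ge {z x : ℝ} (h : z ≤ x) : stein z x = steinA (-z) (-x) := by
  unfold stein
  split_ifs with h1
  · rw [le_antisymm h1 h, steinA_glue]
  · rfl

lemma stein_cell {z w h p : ℝ} (hh : 0 < h) (hp0 : 0 ≤ p) (hp1 : p ≤ 1)
    (hcell : w + h ≤ z ∨ z ≤ w) :
    |(1 - p) * (w * stein z w) + p * ((w + h) * stein z (w + h))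
      + ((if w + h ≤ z then 1 else 0) - Phi z) - (stein z (w + h) - stein z w) / h|
      ≤ h * (2 * (|w| + h) + 8) := by
  rcases hcell with hc | hc
  · have e1 : stein z w = steinA z w := if_pos (by linarith)
    have e2 : stein z (w + h) = steinA z (w + h) := if_pos hc
    rw [e1, e2, if_pos hc]
    refine cell_bound hh hp0 hp1 ?_ (hasDerivAt_steinA z) fun x hx =>
      steinA_bound (by linarith [hx.2])
    rw [abs_le]; constructor <;> linarith [Phi_nonneg z, Phi_le_one z]
  · have e1 : stein z w = steinA (-z) (-w) := stein_of_ge hc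
    have e2 : stein z (w + h) = steinA (-z) (-(w + h)) := stein_of_ge (by linarith)
    rw [e1, e2, if_neg (by linarith)]
    refine cell_bound (g := fun x => steinA (-z) (-x)) hh hp0 hp1 ?_ ?_ ?_
    · rw [abs_le]; constructor <;> linarith [Phi_nonneg z, Phi_le_one z]
    · intro x
      have := (hasDerivAt_steinA (-z) (-x)).scomp x (hasDerivAt_neg x)
      refine this.congr_deriv ?_
      rw [Phi_neg]; simp; ring
    · intro x hx
      have := steinA_bound (z := -z) (x := -x) (by linarith [hx.1])
      refine ⟨this.1, ?_⟩
      rw [← abs_neg, ← neg_mul]; exact this.2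

/-! ### The Berry-Esseen bound for the binomial law -/

/-- Berry-Esseen at a lattice point `z`: there the kink of the Stein solution sits at an end of a
lattice cell, so that `stein_cell` applies to every cell. -/
lemma berryEsseen_lattice {p : ℝ} (hp0 : 0 < p) (hp1 : p < 1) (n : ℕ) {h : ℝ} (hh : 0 < h)
    (hh1 : h ≤ 1) (hv : h ^ 2 * ((n + 1) * p * (1 - p)) = 1) (k : ℤ) :
    |binE p (n + 1) (fun j : ℕ => if (j : ℤ) ≤ k then 1 else 0)
      - Phi (((k : ℝ) - (n + 1) * p) * h)| ≤ 16 * h := by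
  set z := ((k : ℝ) - (n + 1) * p) * h with hz
  set w : ℕ → ℝ := fun j => ((j : ℝ) - (n + 1) * p) * h with hw
  set v : ℝ := (n + 1) * p * (1 - p) with hvdef
  have hq : 0 < 1 - p := by linarith
  have hw1 : ∀ j, w (j + 1) = w j + h := fun j => by simp only [hw]; push_cast; ring
  have hle : ∀ j : ℕ, w j + h ≤ z ↔ (j : ℤ) + 1 ≤ k := by
    intro j
    have : w j + h = (((j : ℝ) + 1) - (n + 1) * p) * h := by simp only [hw]; ring
    rw [this, hz, mul_le_mul_iff_left₀ hh, sub_le_sub_iff_right]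
    exact_mod_cast Iff.rfl
  have hge : ∀ j : ℕ, k ≤ (j : ℤ) → z ≤ w j := by
    intro j hj
    rw [hz, hw, mul_le_mul_iff_left₀ hh, sub_le_sub_iff_right]
    exact_mod_cast hj
  have hst := binE_stein p n (fun j => stein z (w j))
  have e1 : binE p (n + 1) (fun j => w j * stein z (w j))
      = binE p n (fun j => (stein z (w j + h) - stein z (w j)) / h) := by
    have a1 : (fun j => w j * stein z (w j))
        = fun j : ℕ => h * (((j : ℝ) - (n + 1) * p) * stein z (w j)) := by
      funext j; simp only [hw]; ring
    have a2 : (fun j => (stein z (w j + h) - stein z (w j)) / h)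
        = fun j => (1 / h) * (stein z (w (j + 1)) - stein z (w j)) := by
      funext j; rw [hw1]; ring
    rw [a1, a2, binE_mul_left, binE_mul_left, hst, ← hvdef]
    have : h * v = 1 / h := by field_simp; linarith
    rw [← mul_assoc, this]
  have e2 : binE p (n + 1) (fun j => w j * stein z (w j))
      = (1 - p) * binE p n (fun j => w j * stein z (w j))
        + p * binE p n (fun j => (w j + h) * stein z (w j + h)) := by
    simp only [binE, hw1]
  have e3 : binE p n (fun j => (1 - p) * (w j * stein z (w j))
      + p * ((w j + h) * stein z (w j + h))
      + ((if w j + h ≤ z then 1 else 0) - Phi z) - (stein z (w j + h) - stein z (w j)) / h)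
      = binE p n (fun j => if w j + h ≤ z then 1 else 0) - Phi z := by
    rw [binE_sub, binE_add, binE_add, binE_mul_left, binE_mul_left, binE_sub, binE_const, ← e1, e2]
    ring
  have hpt : ∀ j ≤ n, |(1 - p) * (w j * stein z (w j))
      + p * ((w j + h) * stein z (w j + h))
      + ((if w j + h ≤ z then 1 else 0) - Phi z) - (stein z (w j + h) - stein z (w j)) / h|
      ≤ 13 * h + (2 * h ^ 3) * ((j : ℝ) - n * p) ^ 2 := by
    intro j _
    refine (stein_cell hh hp0.le hp1.le ?_).trans ?_
    · rcases le_or_gt ((j : ℤ) + 1) k with hc | hc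
      · exact Or.inl ((hle j).2 hc)
      · exact Or.inr (hge j (by omega))
    · have b1 : |w j| ≤ (1 + (w j) ^ 2) / 2 := by
        rw [← sq_abs (w j)]; nlinarith [sq_nonneg (|w j| - 1)]
      have b2 : w j = h * ((j : ℝ) - n * p) - h * p := by simp only [hw]; ring
      have b3 : (w j) ^ 2 ≤ 2 * (h * ((j : ℝ) - n * p)) ^ 2 + 2 := by
        have : (h * p) ^ 2 ≤ 1 := by
          have : h * p ≤ 1 := by nlinarith
          have : 0 ≤ h * p := by positivity
          nlinarith
        rw [b2]; nlinarith [sq_nonneg (h * ((j : ℝ) - n * p) + h * p)]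
      have b4 : 2 * (|w j| + h) + 8 ≤ 13 + 2 * (h * ((j : ℝ) - n * p)) ^ 2 := by linarith
      calc _ ≤ h * (13 + 2 * (h * ((j : ℝ) - n * p)) ^ 2) := by gcongr
        _ = _ := by ring
  have hE := binE_abs_le hp0.le hp1.le n hpt
  rw [e3, binE_add, binE_const, binE_mul_left, binE_variance] at hE
  have hE2 : 13 * h + 2 * h ^ 3 * (n * p * (1 - p)) ≤ 15 * h := by
    have : n * p * (1 - p) ≤ v := by rw [hvdef]; nlinarith [mul_pos hp0 hq]
    have : h ^ 2 * (n * p * (1 - p)) ≤ 1 := (mul_le_mul_of_nonneg_left this (sq_nonneg h)).trans_eq hv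
    nlinarith
  have hpm := binE_point_le hp0 hp1 n k
  have hsq : 1 / √((n + 1) * p * (1 - p)) = h := by
    rw [← hvdef]
    have : v = (1 / h) ^ 2 := by field_simp; linarith
    rw [this, Real.sqrt_sq (by positivity)]; simp
  rw [hsq] at hpm
  have hpm0 : 0 ≤ binE p n (fun j : ℕ => if (j : ℤ) = k then (1 : ℝ) else 0) := by
    have := binE_mono hp0.le hp1.le n (f := fun _ => 0)
      (g := fun j : ℕ => if (j : ℤ) = k then (1 : ℝ) else 0)
      (fun j _ => by split_ifs <;> norm_num)
    rwa [binE_const] at this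
  have e4 : binE p (n + 1) (fun j : ℕ => if (j : ℤ) ≤ k then (1 : ℝ) else 0)
      = binE p n (fun j => if w j + h ≤ z then 1 else 0)
        + (1 - p) * binE p n (fun j : ℕ => if (j : ℤ) = k then 1 else 0) := by
    have a1 : (fun j : ℕ => if (j : ℤ) ≤ k then (1 : ℝ) else 0)
        = fun j => (if w j + h ≤ z then 1 else 0) + if (j : ℤ) = k then 1 else 0 := by
      funext j
      simp only [hle]
      split_ifs <;> first | omega | norm_num
    have a2 : (fun j : ℕ => if ((j + 1 : ℕ) : ℤ) ≤ k then (1 : ℝ) else 0)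
        = fun j => (if w j + h ≤ z then 1 else 0) := by
      funext j
      simp only [hle]; push_cast; rfl
    have : binE p (n + 1) (fun j : ℕ => if (j : ℤ) ≤ k then (1 : ℝ) else 0)
      = (1 - p) * binE p n (fun j : ℕ => if (j : ℤ) ≤ k then (1 : ℝ) else 0)
        + p * binE p n (fun j : ℕ => if ((j + 1 : ℕ) : ℤ) ≤ k then (1 : ℝ) else 0) := rfl
    rw [this, a2, a1, binE_add]; ring
  rw [e4]
  rw [abs_le] at hE ⊢
  constructor <;> nlinarith

lemma berryEsseen {p : ℝ} (hp0 : 0 < p) (hp1 : p < 1) (n : ℕ) {h : ℝ} (hh : 0 < h)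
    (hh1 : h ≤ 1) (hv : h ^ 2 * ((n + 1) * p * (1 - p)) = 1) (y : ℝ) :
    |binE p (n + 1) (fun j : ℕ => if ((j : ℝ) - (n + 1) * p) * h ≤ y then 1 else 0)
      - Phi y| ≤ 17 * h := by
  set k : ℤ := ⌊y / h + (n + 1) * p⌋ with hk
  have h1 := berryEsseen_lattice hp0 hp1 n hh hh1 hv k
  have h2 : (fun j : ℕ => if ((j : ℝ) - (n + 1) * p) * h ≤ y then (1 : ℝ) else 0)
      = fun j : ℕ => if (j : ℤ) ≤ k then 1 else 0 := by
    funext j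
    have : ((j : ℝ) - (n + 1) * p) * h ≤ y ↔ (j : ℤ) ≤ k := by
      rw [hk, Int.le_floor, ← le_div_iff₀ hh, sub_le_iff_le_add]; simp
    simp only [this]
  rw [h2]
  have h3 : |Phi (((k : ℝ) - (n + 1) * p) * h) - Phi y| ≤ h := by
    refine (Phi_lipschitz _ _).trans ?_
    have a1 : (k : ℝ) ≤ y / h + (n + 1) * p := Int.floor_le _
    have a2 : y / h + (n + 1) * p < k + 1 := Int.lt_floor_add_one _
    have a3 : ((k : ℝ) - (n + 1) * p) * h - y = ((k : ℝ) - (n + 1) * p - y / h) * h := by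
      field_simp
    rw [a3, abs_mul, abs_of_pos hh]
    have : |(k : ℝ) - (n + 1) * p - y / h| ≤ 1 := abs_le.2 ⟨by linarith, by linarith⟩
    nlinarith
  have := abs_sub_le (binE p (n + 1) (fun j : ℕ => if (j : ℤ) ≤ k then (1 : ℝ) else 0))
    (Phi (((k : ℝ) - (n + 1) * p) * h)) (Phi y)
  linarith

/-- Berry-Esseen for a multiple `a W` of the standardized binomial variable `W`; for `a < 0` the
half-line is reversed and the symmetry of the Gaussian law is used. -/
lemma berryEsseen_mul {p : ℝ} (hp0 : 0 < p) (hp1 : p < 1) (n : ℕ) {h : ℝ} (hh : 0 < h)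
    (hh1 : h ≤ 1) (hv : h ^ 2 * ((n + 1) * p * (1 - p)) = 1) {a : ℝ} (ha : a ≠ 0) (t : ℝ) :
    |binE p (n + 1) (fun j : ℕ => if a * (((j : ℝ) - (n + 1) * p) * h) ≤ t then 1 else 0)
      - Phi (t / |a|)| ≤ 18 * h := by
  rcases lt_or_gt_of_ne ha with hneg | hpos
  · set y := t / a with hy
    have e : t / |a| = -y := by rw [abs_of_neg hneg, hy, div_neg]
    rw [e, Phi_neg]
    have h1 := berryEsseen hp0 hp1 n hh hh1 hv y
    have h2 := berryEsseen hp0 hp1 n hh hh1 hv (y - h)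
    have h3 := Phi_lipschitz y (y - h)
    rw [sub_sub_cancel, abs_of_pos hh] at h3
    have e2 : ∀ x : ℝ, a * x ≤ t ↔ y ≤ x := by
      intro x; rw [hy, div_le_iff_of_neg hneg, mul_comm]
    have m1 := binE_mono hp0.le hp1.le (n + 1)
      (f := fun j : ℕ => 1 - if ((j : ℝ) - (n + 1) * p) * h ≤ y then (1 : ℝ) else 0)
      (g := fun j : ℕ => if a * (((j : ℝ) - (n + 1) * p) * h) ≤ t then 1 else 0)
      (fun j _ => by
        simp only [e2]
        split_ifs <;> linarith)
    have m2 := binE_mono hp0.le hp1.le (n + 1)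
      (f := fun j : ℕ => if a * (((j : ℝ) - (n + 1) * p) * h) ≤ t then (1 : ℝ) else 0)
      (g := fun j : ℕ => 1 - if ((j : ℝ) - (n + 1) * p) * h ≤ y - h then (1 : ℝ) else 0)
      (fun j _ => by
        simp only [e2]
        split_ifs <;> linarith)
    rw [binE_sub, binE_const] at m1 m2
    rw [abs_le] at *
    constructor <;> linarith [h1.1, h1.2, h2.1, h2.2, h3.1, h3.2]
  · rw [abs_of_pos hpos]
    have e2 : ∀ x : ℝ, a * x ≤ t ↔ x ≤ t / a := by
      intro x; rw [le_div_iff₀ hpos, mul_comm]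
    simp only [e2]
    exact (berryEsseen hp0 hp1 n hh hh1 hv (t / a)).trans (by linarith)

lemma gaussianReal_mul_le {a : ℝ} (ha : a ≠ 0) (t : ℝ) :
    (gaussianReal 0 1 {z | a * z ≤ t}).toReal = Phi (t / |a|) := by
  rcases lt_or_gt_of_ne ha with hneg | hpos
  · have : {z : ℝ | a * z ≤ t} = Set.Ici (t / a) := by
      ext x; rw [Set.mem_ofPred_eq, Set.mem_Ici, div_le_iff_of_neg hneg, mul_comm]
    rw [this, abs_of_neg hneg, div_neg, Phi_neg, one_sub_Phi,
      gaussianReal_apply_eq_integral 0 one_ne_zero, integral_Ici_eq_integral_Ioi,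
      ENNReal.toReal_ofReal]
    · simp only [gdens_eq]
    · exact integral_nonneg fun x => gaussianPDFReal_nonneg 0 1 x
  · have : {z : ℝ | a * z ≤ t} = Set.Iic (t / a) := by
      ext x; rw [Set.mem_ofPred_eq, Set.mem_Iic, le_div_iff₀ hpos, mul_comm]
    rw [this, abs_of_pos hpos, gaussianReal_Iic]

/-! ### The compound-binomial pair -/

open Classical in
/-- Probabilities of events of a compound-binomial pair as iterated binomial expectations. -/
lemma IsCompoundBinomialPair.prob_eq {Ω : Type*} [MeasurableSpace Ω] {P : Measure Ω}
    [IsProbabilityMeasure P] {μ1 Γ1 Γ0 : ℝ} {n L : ℕ} {D S : Ω → ℕ}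
    (hμ0 : 0 ≤ μ1) (hμ1 : μ1 ≤ 1) (hp : ∀ ℓ, Γ1 ^ ℓ * Γ0 ^ (L - ℓ) ∈ Set.Icc (0 : ℝ) 1)
    (hDS : IsCompoundBinomialPair P μ1 (1 - μ1) Γ1 Γ0 n L D S) (Q : ℕ → ℕ → Prop) :
    (P {ω | Q (D ω) (S ω)}).toReal = binE μ1 L (fun ℓ =>
      binE (Γ1 ^ ℓ * Γ0 ^ (L - ℓ)) (n - 1) (fun d => if Q d ℓ then 1 else 0)) := by
  obtain ⟨hD, hS, hmass⟩ := hDS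
  set s : Finset (ℕ × ℕ) := Finset.range (L + 1) ×ˢ Finset.range (n - 1 + 1) with hs
  have hset : ∀ A : Set (ℕ × ℕ), MeasurableSet {ω | (S ω, D ω) ∈ A} := fun A =>
    (hS.prodMk hD) (MeasurableSet.of_discrete)
  have key : ∀ R : ℕ → ℕ → Prop, P.real {ω | (S ω, D ω) ∈ s ∧ R (D ω) (S ω)}
      = binE μ1 L (fun ℓ =>
      binE (Γ1 ^ ℓ * Γ0 ^ (L - ℓ)) (n - 1) (fun d => if R d ℓ then 1 else 0)) := by
    intro R
    have h1 : {ω | (S ω, D ω) ∈ s ∧ R (D ω) (S ω)}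
        = ⋃ x ∈ s.filter (fun x => R x.2 x.1), {ω | (S ω, D ω) ∈ ({x} : Set (ℕ × ℕ))} := by
      ext ω; simp
    rw [h1, measureReal_biUnion_finset ?_ (fun x _ => hset {x}), Finset.sum_filter, hs,
      Finset.sum_product, binE_eq_sum]
    · refine Finset.sum_congr rfl fun ℓ hℓ => ?_
      rw [binE_eq_sum, Finset.mul_sum]
      refine Finset.sum_congr rfl fun d hd => ?_
      rw [Finset.mem_range] at hℓ hd
      simp only
      split_ifs
      · have e : {ω | (S ω, D ω) ∈ ({(ℓ, d)} : Set (ℕ × ℕ))} = {ω | D ω = d ∧ S ω = ℓ} := by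
          ext ω; simp [and_comm]
        have h0 := (hp ℓ).1
        have h01 : 0 ≤ 1 - Γ1 ^ ℓ * Γ0 ^ (L - ℓ) := by linarith [(hp ℓ).2]
        have h02 : 0 ≤ 1 - μ1 := by linarith
        rw [e, Measure.real, hmass d (by omega) ℓ (by omega), ENNReal.toReal_ofReal (by positivity)]
        ring
      · simp
    · intro x _ y _ hxy
      refine Set.disjoint_left.2 fun ω h1 h2 => hxy ?_
      simp only [Set.mem_ofPred_eq, Set.mem_singleton_iff] at h1 h2
      rw [← h1, ← h2]
  have hfull : P.real {ω | (S ω, D ω) ∈ s} = 1 := by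
    have := key (fun _ _ => True)
    simpa [binE_const] using this
  have hae : ∀ᵐ ω ∂P, (S ω, D ω) ∈ s := by
    have h2 : MeasurableSet {ω | (S ω, D ω) ∈ s} := hset (s : Set (ℕ × ℕ))
    have h3 : P {ω | (S ω, D ω) ∈ s} = 1 := by
      rw [Measure.real] at hfull
      rw [← ENNReal.ofReal_toReal (measure_ne_top P _), hfull, ENNReal.ofReal_one]
    exact (prob_compl_eq_zero_iff h2).2 h3
  rw [← key Q]
  refine congrArg ENNReal.toReal (measure_congr ?_)
  filter_upwards [hae] with ω hω
  exact propext ⟨fun h => ⟨hω, h⟩, fun h => h.2⟩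

lemma log_connect {Γ0 Γ1 μ1 : ℝ} (h0 : 0 < Γ0) (h1 : 0 < Γ1) {ℓ L : ℕ} (h : ℓ ≤ L) :
    Real.log (Γ1 ^ ℓ * Γ0 ^ (L - ℓ)) = L * (μ1 * Real.log Γ1 + (1 - μ1) * Real.log Γ0)
      + ((ℓ : ℝ) - L * μ1) * (Real.log Γ1 - Real.log Γ0) := by
  rw [Real.log_mul (by positivity) (by positivity), Real.log_pow, Real.log_pow, Nat.cast_sub h]
  ring

/-- The conditional probability that `D` is off its conditional mean by more than half of it. -/
lemma binE_relative_deviation {p r : ℝ} (hp0 : 0 < p) (hp1 : p ≤ 1) {n : ℕ} (hn : 2 ≤ n)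
    (hr : 0 < r) (hrn : r ≤ n * p) :
    binE p (n - 1) (fun d : ℕ => if ((n - 1 : ℕ) : ℝ) * p / 2 < |(d : ℝ) - ((n - 1 : ℕ) : ℝ) * p|
      then 1 else 0) ≤ 8 / r := by
  set N : ℝ := ((n - 1 : ℕ) : ℝ) with hN
  have hN1 : (n : ℝ) / 2 ≤ N := by
    rw [hN, Nat.cast_sub (by omega)]
    have : (2 : ℝ) ≤ n := by exact_mod_cast hn
    push_cast; linarith
  have hNp : r / 2 ≤ N * p := by nlinarith
  have hNp0 : 0 < N * p := by linarith
  refine (binE_chebyshev hp0.le hp1 (n - 1) (half_pos hNp0)).trans ?_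
  rw [← hN]
  have h1 : N * p * (1 - p) / (N * p / 2) ^ 2 = 4 * (1 - p) / (N * p) := by
    field_simp
    ring
  rw [h1, div_le_div_iff₀ hNp0 hr]
  nlinarith

/-- Off the exceptional event, `log D` is within `2` of `log n + log p`. -/
lemma log_deviation {p : ℝ} (hp0 : 0 < p) {n d : ℕ} (hn : 2 ≤ n)
    (h : |(d : ℝ) - ((n - 1 : ℕ) : ℝ) * p| ≤ ((n - 1 : ℕ) : ℝ) * p / 2) :
    0 < (d : ℝ) ∧ |Real.log d - Real.log n - Real.log p| ≤ 2 := by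
  have hn2 : (2 : ℝ) ≤ n := by exact_mod_cast hn
  rw [Nat.cast_sub (by omega)] at h
  push_cast at h
  have h1 := (abs_le.1 h).1
  have h2 := (abs_le.1 h).2
  have hnp : 0 < (n : ℝ) * p := by positivity
  have hlo : (n : ℝ) * p / 4 ≤ d := by nlinarith
  have hhi : (d : ℝ) ≤ 2 * (n * p) := by nlinarith
  have hd : 0 < (d : ℝ) := by linarith
  refine ⟨hd, ?_⟩
  have e : Real.log d - Real.log n - Real.log p = Real.log (d / (n * p)) := by
    rw [Real.log_div hd.ne' hnp.ne', Real.log_mul (by positivity) hp0.ne']; ring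
  rw [e, abs_le]
  have hl2 : Real.log 2 ≤ 1 := by linarith [Real.log_two_lt_d9]
  constructor
  · have : Real.log (1 / 4) ≤ Real.log (d / (n * p)) := by
      apply Real.log_le_log (by norm_num)
      rw [div_le_div_iff₀ (by norm_num) hnp]; linarith
    have e4 : Real.log (1 / 4) = -(2 * Real.log 2) := by
      rw [one_div, Real.log_inv]
      have : (4 : ℝ) = 2 ^ 2 := by norm_num
      rw [this, Real.log_pow]; push_cast; ring
    linarith
  · have : Real.log (d / (n * p)) ≤ Real.log 2 := by
      apply Real.log_le_log (by positivity)
      rw [div_le_iff₀ hnp]; linarith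
    linarith

/-- The logarithm of the normalized degree. -/
lemma normalized_eq_exp {d s lnn L m : ℝ} (hd : 0 < d) (hs : 0 < s) (hL : L = s ^ 2) :
    d ^ (s⁻¹) * Real.exp (-s * ((L / lnn)⁻¹ + m)) = Real.exp ((Real.log d - lnn - L * m) / s) := by
  rw [Real.rpow_def_of_pos hd, ← Real.exp_add, hL, inv_div]
  congr 1
  field_simp
  ring

open Classical in
/-- The estimate for fixed `n`: the error consists of the Berry-Esseen error, the shift of the
threshold by `2 / √L`, and the probability of the exceptional event. Here `r` bounds from below
the conditional mean of `D` on the event that `S` is within `ε L` of its mean. -/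
lemma delta_bound {Ω : Type*} [MeasurableSpace Ω] {P : Measure Ω} [IsProbabilityMeasure P]
    {μ1 Γ1 Γ0 : ℝ} {n L : ℕ} {D S : Ω → ℕ} (hμ1 : μ1 ∈ Set.Ioo (0 : ℝ) 1)
    (hΓ0 : Γ0 ∈ Set.Ioo (0 : ℝ) 1) (hΓ1 : Γ1 ∈ Set.Ioo (0 : ℝ) 1) (hΓ : Γ0 ≠ Γ1) (hn : 2 ≤ n)
    (hDS : IsCompoundBinomialPair P μ1 (1 - μ1) Γ1 Γ0 n L D S)
    (hL0 : 0 < L) (hLv : 1 ≤ (L : ℝ) * μ1 * (1 - μ1))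
    {ε r : ℝ} (hε : 0 < ε) (hr : 0 < r)
    (hgood : ∀ ℓ ≤ L, |(ℓ : ℝ) - L * μ1| ≤ ε * L → r ≤ n * (Γ1 ^ ℓ * Γ0 ^ (L - ℓ)))
    (x : ℝ) (hx : 0 ≤ x) :
    |(P {ω | (D ω : ℝ) ^ ((√(L : ℝ))⁻¹) * Real.exp (-√(L : ℝ) * (((L : ℝ) / Real.log n)⁻¹
        + Real.log (Γ1 ^ μ1 * Γ0 ^ (1 - μ1)))) ≤ x}).toReal
      - (gaussianReal 0 1 {z | (Γ1 / Γ0) ^ (√((1 - μ1) * μ1) * z) ≤ x}).toReal|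
    ≤ (18 / √((1 - μ1) * μ1) + 2 / |(Real.log Γ1 - Real.log Γ0) * √((1 - μ1) * μ1)|) / √(L : ℝ)
      + (1 / (ε ^ 2 * L) + 8 / r) := by
  have hq : 0 < 1 - μ1 := by linarith [hμ1.2]
  have hp := hμ1.1
  set σ := √((1 - μ1) * μ1) with hσ
  set s := √(L : ℝ) with hs
  set c := Real.log Γ1 - Real.log Γ0 with hc
  set m := μ1 * Real.log Γ1 + (1 - μ1) * Real.log Γ0 with hm
  have hLr : (0 : ℝ) < L := by exact_mod_cast hL0
  have hs0 : 0 < s := Real.sqrt_pos.2 hLr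
  have hs2 : (L : ℝ) = s ^ 2 := (Real.sq_sqrt hLr.le).symm
  have hσ0 : 0 < σ := Real.sqrt_pos.2 (by positivity)
  have hσ2 : σ ^ 2 = (1 - μ1) * μ1 := Real.sq_sqrt (by positivity)
  have hc0 : c ≠ 0 := by
    rw [hc, sub_ne_zero]
    exact fun h => hΓ (Real.log_injOn_pos hΓ0.1 hΓ1.1 h.symm)
  have ha0 : c * σ ≠ 0 := mul_ne_zero hc0 hσ0.ne'
  have hlogm : Real.log (Γ1 ^ μ1 * Γ0 ^ (1 - μ1)) = m := by
    rw [Real.log_mul (Real.rpow_pos_of_pos hΓ1.1 _).ne' (Real.rpow_pos_of_pos hΓ0.1 _).ne',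
      Real.log_rpow hΓ1.1, Real.log_rpow hΓ0.1]
  rw [hlogm]
  set pr : ℕ → ℝ := fun ℓ => Γ1 ^ ℓ * Γ0 ^ (L - ℓ) with hpr
  have hpr0 : ∀ ℓ, 0 < pr ℓ := fun ℓ => mul_pos (pow_pos hΓ1.1 _) (pow_pos hΓ0.1 _)
  have hpr1 : ∀ ℓ, pr ℓ ≤ 1 := fun ℓ =>
    mul_le_one₀ (pow_le_one₀ hΓ1.1.le hΓ1.2.le) (pow_pos hΓ0.1 _).le
      (pow_le_one₀ hΓ0.1.le hΓ0.2.le)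
  set X : ℕ → ℝ := fun d => (d : ℝ) ^ (s⁻¹) * Real.exp (-s * (((L : ℝ) / Real.log n)⁻¹ + m)) with hX
  -- the exceptional event
  set bad : ℕ → ℕ → ℝ := fun ℓ d =>
    if ((n - 1 : ℕ) : ℝ) * pr ℓ / 2 < |(d : ℝ) - ((n - 1 : ℕ) : ℝ) * pr ℓ| then 1 else 0 with hbad
  set β : ℝ := 1 / (ε ^ 2 * L) + 8 / r with hβ
  have hβ0 : 0 ≤ β := by positivity
  have hbadE : binE μ1 L (fun ℓ => binE (pr ℓ) (n - 1) (bad ℓ)) ≤ β := by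
    have h1 : ∀ ℓ ≤ L, binE (pr ℓ) (n - 1) (bad ℓ)
        ≤ (if ε * L < |(ℓ : ℝ) - L * μ1| then 1 else 0) + 8 / r := by
      intro ℓ hℓ
      split_ifs with hdev
      · have := binE_mono (hpr0 ℓ).le (hpr1 ℓ) (n - 1) (f := bad ℓ) (g := fun _ => 1)
          (fun d _ => by simp only [hbad]; split_ifs <;> norm_num)
        rw [binE_const] at this
        have : 0 ≤ 8 / r := by positivity
        linarith
      · rw [zero_add]
        exact binE_relative_deviation (hpr0 ℓ) (hpr1 ℓ) hn hr (hgood ℓ hℓ (not_lt.1 hdev))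
    refine (binE_mono hp.le hμ1.2.le L h1).trans ?_
    rw [binE_add, binE_const, hβ]
    gcongr
    refine (binE_chebyshev hp.le hμ1.2.le L (by positivity)).trans ?_
    rw [div_le_div_iff₀ (by positivity) (by positivity)]
    have : μ1 * (1 - μ1) ≤ 1 := by nlinarith
    have h2 : 0 ≤ (ε ^ 2 * L ^ 2 : ℝ) := by positivity
    nlinarith
  have hprob := hDS.prob_eq hp.le hμ1.2.le (fun ℓ => ⟨(hpr0 ℓ).le, hpr1 ℓ⟩) (fun d _ => X d ≤ x)
  rw [show (P {ω | (D ω : ℝ) ^ (s⁻¹) * Real.exp (-s * (((L : ℝ) / Real.log n)⁻¹ + m)) ≤ x}).toReal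
    = _ from hprob]
  set pX := binE μ1 L (fun ℓ => binE (pr ℓ) (n - 1) (fun d => if X d ≤ x then 1 else 0)) with hpX
  have hC0 : 0 ≤ (18 / σ + 2 / |c * σ|) / s := by positivity
  have hdev : ∀ ℓ d : ℕ, ¬ (((n - 1 : ℕ) : ℝ) * pr ℓ / 2 < |(d : ℝ) - ((n - 1 : ℕ) : ℝ) * pr ℓ|) →
      0 < (d : ℝ) ∧ |Real.log d - Real.log n - Real.log (pr ℓ)| ≤ 2 := fun ℓ d h =>
    log_deviation (hpr0 ℓ) hn (not_lt.1 h)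
  rcases hx.eq_or_lt with hx0 | hxpos
  · -- at `x = 0` the Gaussian side vanishes and `{D = 0}` is exceptional
    have hg : {z : ℝ | (Γ1 / Γ0) ^ (σ * z) ≤ x} = ∅ := by
      ext z
      simp only [Set.mem_ofPred_eq, Set.mem_empty_iff_false, iff_false, not_le, ← hx0]
      exact Real.rpow_pos_of_pos (div_pos hΓ1.1 hΓ0.1) _
    rw [hg, measure_empty, ENNReal.toReal_zero, sub_zero]
    have h1 : pX ≤ β := by
      refine le_trans (binE_mono hp.le hμ1.2.le L fun ℓ _ =>
        binE_mono (hpr0 ℓ).le (hpr1 ℓ) (n - 1) fun d _ => ?_) hbadE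
      simp only [hbad]
      split_ifs with h1 h2 h2
      · exact le_rfl
      · exfalso
        have : 0 < X d := mul_pos (Real.rpow_pos_of_pos (hdev ℓ d h2).1 _) (Real.exp_pos _)
        linarith
      · exact zero_le_one
      · exact le_rfl
    have h2 : 0 ≤ pX := by rw [← hprob]; exact ENNReal.toReal_nonneg
    rw [abs_of_nonneg h2]; linarith
  · set t := Real.log x with ht
    set h := 1 / (s * σ) with hh
    have hh0 : 0 < h := by positivity
    have hsσ : (s * σ) ^ 2 = L * μ1 * (1 - μ1) := by rw [mul_pow, ← hs2, hσ2]; ring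
    have hh1 : h ≤ 1 := by
      rw [hh, div_le_one (by positivity)]
      nlinarith [mul_pos hs0 hσ0]
    obtain ⟨L', rfl⟩ : ∃ L', L = L' + 1 := ⟨L - 1, by omega⟩
    have hcast : ((L' + 1 : ℕ) : ℝ) = (L' : ℝ) + 1 := by push_cast; rfl
    have hv : h ^ 2 * (((L' : ℝ) + 1) * μ1 * (1 - μ1)) = 1 := by
      rw [← hcast, ← hsσ, hh]; field_simp
    have hBE := fun t => berryEsseen_mul hp hμ1.2 L' hh0 hh1 hv ha0 t
    rw [← hcast] at hBE
    have hg : {z : ℝ | (Γ1 / Γ0) ^ (σ * z) ≤ x} = {z | c * σ * z ≤ t} := by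
      ext z
      rw [Set.mem_ofPred_eq, Set.mem_ofPred_eq, Real.rpow_def_of_pos (div_pos hΓ1.1 hΓ0.1),
        ← Real.le_log_iff_exp_le hxpos, Real.log_div hΓ1.1.ne' hΓ0.1.ne', mul_assoc]
    rw [hg, gaussianReal_mul_le ha0]
    have hlogX : ∀ ℓ ≤ L' + 1, ∀ d : ℕ, ¬ (((n - 1 : ℕ) : ℝ) * pr ℓ / 2
          < |(d : ℝ) - ((n - 1 : ℕ) : ℝ) * pr ℓ|) →
        ∃ δ : ℝ, |δ| ≤ 2 / s ∧
          (X d ≤ x ↔ c * σ * (((ℓ : ℝ) - ((L' + 1 : ℕ) : ℝ) * μ1) * h) + δ ≤ t) := by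
      intro ℓ hℓ d hd
      obtain ⟨hd0, hd2⟩ := hdev ℓ d hd
      refine ⟨(Real.log d - Real.log n - Real.log (pr ℓ)) / s, ?_, ?_⟩
      · rw [abs_div, abs_of_pos hs0]; gcongr
      · simp only [hX]
        rw [normalized_eq_exp hd0 hs0 hs2, ← Real.le_log_iff_exp_le hxpos, hpr,
          log_connect (μ1 := μ1) hΓ0.1 hΓ1.1 hℓ, ← hm, ← hc, ← ht, hh]
        apply Eq.to_iff
        congr 1
        field_simp
        ring
    have hLip : ∀ δ, |Phi ((t + δ) / |c * σ|) - Phi (t / |c * σ|)| ≤ |δ| / |c * σ| := by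
      intro δ
      refine (Phi_lipschitz _ _).trans (le_of_eq ?_)
      rw [← sub_div, add_sub_cancel_left, abs_div, abs_abs]
    have hup : pX ≤ binE μ1 (L' + 1) (fun ℓ : ℕ =>
        if c * σ * (((ℓ : ℝ) - ((L' + 1 : ℕ) : ℝ) * μ1) * h) ≤ t + 2 / s then 1 else 0) + β := by
      refine le_trans ?_ (add_le_add_right hbadE _)
      rw [← binE_add]
      refine binE_mono hp.le hμ1.2.le _ fun ℓ hℓ => ?_
      rw [← binE_const (pr ℓ) (if c * σ * (((ℓ : ℝ) - ((L' + 1 : ℕ) : ℝ) * μ1) * h) ≤ t + 2 / s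
        then 1 else 0) (n - 1), ← binE_add]
      refine binE_mono (hpr0 ℓ).le (hpr1 ℓ) _ fun d _ => ?_
      by_cases hb : ((n - 1 : ℕ) : ℝ) * pr ℓ / 2 < |(d : ℝ) - ((n - 1 : ℕ) : ℝ) * pr ℓ|
      · simp only [hbad, if_pos hb]
        split_ifs <;> norm_num
      · obtain ⟨δ, hδ, hiff⟩ := hlogX ℓ hℓ d hb
        have := (abs_le.1 hδ).1
        simp only [hbad, if_neg hb, hiff]
        split_ifs <;> linarith
    have hlow : binE μ1 (L' + 1) (fun ℓ : ℕ =>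
        if c * σ * (((ℓ : ℝ) - ((L' + 1 : ℕ) : ℝ) * μ1) * h) ≤ t + -(2 / s) then 1 else 0)
        ≤ pX + β := by
      refine le_trans ?_ (add_le_add_right hbadE _)
      rw [hpX, ← binE_add]
      refine binE_mono hp.le hμ1.2.le _ fun ℓ hℓ => ?_
      rw [← binE_const (pr ℓ) (if c * σ * (((ℓ : ℝ) - ((L' + 1 : ℕ) : ℝ) * μ1) * h)
        ≤ t + -(2 / s) then 1 else 0) (n - 1), ← binE_add]
      refine binE_mono (hpr0 ℓ).le (hpr1 ℓ) _ fun d _ => ?_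
      by_cases hb : ((n - 1 : ℕ) : ℝ) * pr ℓ / 2 < |(d : ℝ) - ((n - 1 : ℕ) : ℝ) * pr ℓ|
      · simp only [hbad, if_pos hb]
        split_ifs <;> norm_num
      · obtain ⟨δ, hδ, hiff⟩ := hlogX ℓ hℓ d hb
        have := (abs_le.1 hδ).2
        simp only [hbad, if_neg hb, hiff]
        split_ifs <;> linarith
    have e1 := abs_le.1 (hBE (t + 2 / s))
    have e2 := abs_le.1 (hBE (t + -(2 / s)))
    have e3 := abs_le.1 (hLip (2 / s))
    have e4 := abs_le.1 (hLip (-(2 / s)))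
    rw [abs_neg] at e4
    rw [abs_of_pos (by positivity : 0 < 2 / s)] at e3 e4
    have e5 : (18 / σ + 2 / |c * σ|) / s = 18 * h + 2 / s / |c * σ| := by
      rw [hh]; field_simp
    rw [e5, abs_le]
    constructor <;> linarith [e1.1, e1.2, e2.1, e2.2, e3.1, e3.2, e4.1, e4.2]

/-- the rate of convergence in the Berry–Esseen estimate:
`sup_{x ≥ 0} |Δ_n(x)| = O(1/√(ln n))` as `n → ∞`. -/
theorem stmt11 {Ω : Type*} [MeasurableSpace Ω] (P : Measure Ω) [IsProbabilityMeasure P]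
    (μ0 μ1 Γ0 Γ1 : ℝ) (hμ0 : μ0 ∈ Set.Ioo (0:ℝ) 1) (hμ1 : μ1 ∈ Set.Ioo (0:ℝ) 1)
    (hμ : μ0 + μ1 = 1) (hΓ0 : Γ0 ∈ Set.Ioo (0:ℝ) 1) (hΓ1 : Γ1 ∈ Set.Ioo (0:ℝ) 1)
    (hΓ : Γ0 ≠ Γ1) (ρ : ℝ) (hρ : 0 < ρ)
    (hcond : 0 < 1 + ρ * Real.log (Γ1 ^ μ1 * Γ0 ^ μ0))
    (L : ℕ → ℕ) (hL : IsAdmissible ρ L)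
    (D S : ℕ → Ω → ℕ)
    (hDS : ∀ n, 2 ≤ n → IsCompoundBinomialPair P μ1 μ0 Γ1 Γ0 n (L n) (D n) (S n)) :
    ∃ K : ℝ, ∃ n₀ : ℕ, ∀ n, n₀ ≤ n →
      (⨆ x : {x : ℝ // 0 ≤ x},
        |(P {ω | (D n ω : ℝ) ^ ((Real.sqrt (L n))⁻¹) *
            Real.exp (- Real.sqrt (L n) *
              ((((L n : ℝ) / Real.log n))⁻¹ + Real.log (Γ1 ^ μ1 * Γ0 ^ μ0))) ≤ x.1}).toReal -
         (gaussianReal 0 1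
            {z | (Γ1 / Γ0) ^ (Real.sqrt (μ0 * μ1) * z) ≤ x.1}).toReal|) ≤
        K / Real.sqrt (Real.log n) := by
  have hμ0' : μ0 = 1 - μ1 := by linarith
  subst hμ0'
  obtain ⟨hLpos, hLlim⟩ := hL
  set m := Real.log (Γ1 ^ μ1 * Γ0 ^ (1 - μ1)) with hm
  set c := Real.log Γ1 - Real.log Γ0 with hc
  set σ := √((1 - μ1) * μ1) with hσ
  set δ := 1 + ρ * m with hδ
  have hq : 0 < 1 - μ1 := hμ0.1
  have hp := hμ1.1
  have hc0 : 0 < |c| := by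
    rw [abs_pos, hc, sub_ne_zero]
    exact fun h => hΓ (Real.log_injOn_pos hΓ0.1 hΓ1.1 h.symm)
  have hσ0 : 0 < σ := Real.sqrt_pos.2 (by positivity)
  have hmeq : m = μ1 * Real.log Γ1 + (1 - μ1) * Real.log Γ0 := by
    rw [hm, Real.log_mul (Real.rpow_pos_of_pos hΓ1.1 _).ne' (Real.rpow_pos_of_pos hΓ0.1 _).ne',
      Real.log_rpow hΓ1.1, Real.log_rpow hΓ0.1]
  have hlog : Tendsto (fun n : ℕ => Real.log n) atTop atTop :=
    Real.tendsto_log_atTop.comp tendsto_natCast_atTop_atTop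
  -- with this `ε`, `n Γ1 ^ ℓ Γ0 ^ (L - ℓ) ≥ n ^ (δ / 4)` whenever `|ℓ - L μ1| ≤ ε L`
  set ε := δ / (8 * ρ * |c|) with hε
  have hε0 : 0 < ε := by positivity
  set C1 := 18 / σ + 2 / |c * σ| with hC1
  have hC10 : 0 ≤ C1 := by positivity
  have hev : ∀ᶠ n : ℕ in atTop, 2 ≤ n ∧ 1 ≤ Real.log n ∧
      2 / (ρ * (μ1 * (1 - μ1))) ≤ Real.log n ∧
      1 / 2 ≤ (L n : ℝ) / (ρ * Real.log n) ∧ (L n : ℝ) / (ρ * Real.log n) ≤ 2 ∧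
      δ / 2 ≤ 1 + ρ * m * ((L n : ℝ) / (ρ * Real.log n)) := by
    have hlim2 : Tendsto (fun n => 1 + ρ * m * ((L n : ℝ) / (ρ * Real.log n))) atTop (nhds δ) := by
      have := (hLlim.const_mul (ρ * m)).const_add 1
      rwa [mul_one] at this
    filter_upwards [eventually_ge_atTop 2, hlog.eventually_ge_atTop 1,
      hlog.eventually_ge_atTop (2 / (ρ * (μ1 * (1 - μ1)))),
      hLlim.eventually_const_le (by norm_num : (1 / 2 : ℝ) < 1),
      hLlim.eventually_le_const (by norm_num : (1 : ℝ) < 2),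
      hlim2.eventually_const_le (half_lt_self hcond)] with n h1 h2 h3 h4 h5 h6
    exact ⟨h1, h2, h3, h4, h5, h6⟩
  obtain ⟨n₀, hn₀⟩ := eventually_atTop.1 hev
  refine ⟨C1 * √(2 / ρ) + (1 / ε ^ 2 * (2 / ρ) + 8 / (δ / 4)), n₀, fun n hn => ?_⟩
  obtain ⟨hn2, hln1, hln2, hlo, hhi, hδ2⟩ := hn₀ n hn
  set l := Real.log n with hl
  have hl0 : 0 < l := by linarith
  have hLn : (0 : ℝ) < L n := by exact_mod_cast hLpos n
  have hLlo : ρ / 2 * l ≤ L n := by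
    rw [le_div_iff₀ (by positivity)] at hlo; linarith
  have hLhi : (L n : ℝ) ≤ 2 * ρ * l := by
    rw [div_le_iff₀ (by positivity)] at hhi; linarith
  have hδ3 : δ / 2 * l ≤ l + L n * m := by
    have : (1 + ρ * m * ((L n : ℝ) / (ρ * l))) * l = l + L n * m := by field_simp
    rw [← this]; gcongr
  have hLv : 1 ≤ (L n : ℝ) * μ1 * (1 - μ1) := by
    have h1 : 0 < μ1 * (1 - μ1) := by positivity
    rw [div_le_iff₀ (by positivity)] at hln2
    have h2 := mul_le_mul_of_nonneg_right hLlo h1.le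
    linarith
  have hsl : 1 ≤ √l := Real.one_le_sqrt.2 hln1
  have hsl2 : √l * √l = l := Real.mul_self_sqrt hl0.le
  have hsll : √l ≤ l := by nlinarith
  have hn0 : (0 : ℝ) < n := by positivity
  have hgood : ∀ ℓ ≤ L n, |(ℓ : ℝ) - L n * μ1| ≤ ε * L n →
      δ / 4 * l ≤ n * (Γ1 ^ ℓ * Γ0 ^ (L n - ℓ)) := by
    intro ℓ hℓ hdev
    have hpr : 0 < Γ1 ^ ℓ * Γ0 ^ (L n - ℓ) := mul_pos (pow_pos hΓ1.1 _) (pow_pos hΓ0.1 _)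
    have h1 : δ / 4 * l ≤ Real.log (n * (Γ1 ^ ℓ * Γ0 ^ (L n - ℓ))) := by
      rw [Real.log_mul hn0.ne' hpr.ne', log_connect (μ1 := μ1) hΓ0.1 hΓ1.1 hℓ, ← hmeq, ← hc, ← hl]
      have h2 : |((ℓ : ℝ) - L n * μ1) * c| ≤ δ / 4 * l := by
        rw [abs_mul]
        calc _ ≤ ε * (2 * ρ * l) * |c| := by
              gcongr; exact hdev.trans (by gcongr)
          _ = δ / 4 * l := by rw [hε]; field_simp; ring
      have := (abs_le.1 h2).1
      linarith
    have h3 := Real.add_one_le_exp (Real.log (n * (Γ1 ^ ℓ * Γ0 ^ (L n - ℓ))))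
    rw [Real.exp_log (by positivity)] at h3
    linarith
  have : Nonempty {x : ℝ // 0 ≤ x} := ⟨⟨0, le_rfl⟩⟩
  refine ciSup_le fun x => ?_
  have hmain := delta_bound hμ1 hΓ0 hΓ1 hΓ hn2 (hDS n hn2) (hLpos n) hLv hε0
    (by positivity : 0 < δ / 4 * l) hgood x.1 x.2
  refine hmain.trans ?_
  rw [← hσ, ← hc, ← hC1, add_div (C1 * √(2 / ρ))]
  refine add_le_add ?_ ?_
  · rw [div_le_div_iff₀ (Real.sqrt_pos.2 hLn) (by positivity), mul_assoc,
      ← Real.sqrt_mul (by positivity)]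
    gcongr
    rw [div_mul_eq_mul_div, le_div_iff₀ hρ]
    linarith
  · rw [add_div (1 / ε ^ 2 * (2 / ρ))]
    refine add_le_add ?_ ?_
    · have : 1 / (ε ^ 2 * (L n : ℝ)) ≤ 1 / (ε ^ 2 * (ρ / 2 * √l)) := by
        gcongr
        exact le_trans (by gcongr) hLlo
      refine this.trans (le_of_eq ?_)
      field_simp
    · have : 8 / (δ / 4 * l) ≤ 8 / (δ / 4 * √l) := by gcongr
      refine this.trans (le_of_eq ?_)
      field_simp
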